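/- Let A ⊆ ℤⁿ be a finite set that is dual effective. Then for every proper subset B ⊊ A, the discriminant D_A is different from the preimage π_B⁻¹(D_B) of the B-discriminant under the coefficient-forgetting projection π_B : ℂ^A → ℂ^B. -/

import Mathlib

open Pointwise MeasureTheory

namespace Esterov

/-- The standard embedding of the lattice `ℤⁿ` into `ℝⁿ`. -/
def toR {n : ℕ} (a : Fin n → ℤ) : Fin n → ℝ := fun j => (a j : ℝ)

/-- The lattice mixed volume of finite sets `A₁, …, Aₙ ⊆ ℤⁿ`:
`MV(A₁,…,Aₙ) = ∑_{∅ ≠ S ⊆ {1,…,n}} (−1)^{n−|S|} vol (conv (∑_{i ∈ S} Aᵢ))`. -/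
noncomputable def MV {n : ℕ} (A : Fin n → Finset (Fin n → ℤ)) : ℝ :=
  ∑ S ∈ Finset.univ.powerset.filter (fun S : Finset (Fin n) => S.Nonempty),
    (-1 : ℝ) ^ (n - S.card) *
      (volume (convexHull ℝ (∑ i ∈ S, toR '' (A i : Set (Fin n → ℤ))))).toReal

/-- The complex torus `(ℂ∖0)ⁿ`. -/
abbrev Torus (n : ℕ) := Fin n → ℂˣ

/-- The index type of the coefficients of a tuple of supports. -/
abbrev CIdx {n : ℕ} (A : Fin n → Finset (Fin n → ℤ)) := Σ i : Fin n, {a : Fin n → ℤ // a ∈ A i}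

/-- The space `ℂ^A = ℂ^{A₁} ⊕ ⋯ ⊕ ℂ^{Aₙ}` of systems of Laurent polynomials supported at `A`,
encoded by their coefficients. -/
abbrev Coeff {n : ℕ} (A : Fin n → Finset (Fin n → ℤ)) := CIdx A → ℂ

/-- The value of the Laurent monomial `x^a` at a point `x` of the torus. -/
noncomputable def mono {n : ℕ} (a : Fin n → ℤ) (x : Torus n) : ℂ :=
  ∏ j, ((x j : ℂ) ^ (a j))

/-- The value of the `i`-th polynomial of the system `c ∈ ℂ^A` at `x`. -/
noncomputable def evalAt {n : ℕ} (A : Fin n → Finset (Fin n → ℤ)) (c : Coeff A) (i : Fin n)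
    (x : Torus n) : ℂ :=
  ∑ a ∈ (A i).attach, c ⟨i, a⟩ * mono a.1 x

/-- `x` is a common root of the system `c ∈ ℂ^A`. -/
def IsRoot {n : ℕ} (A : Fin n → Finset (Fin n → ℤ)) (c : Coeff A) (x : Torus n) : Prop :=
  ∀ i, evalAt A c i x = 0

/-- The Jacobian matrix `(∂fᵢ/∂xⱼ (x))` of the system `c ∈ ℂ^A` at `x`
(note `∂(x^a)/∂xⱼ = aⱼ x^a / xⱼ`). -/
noncomputable def jacobian {n : ℕ} (A : Fin n → Finset (Fin n → ℤ)) (c : Coeff A)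
    (x : Torus n) : Matrix (Fin n) (Fin n) ℂ :=
  Matrix.of fun i j => (∑ a ∈ (A i).attach, c ⟨i, a⟩ * (a.1 j : ℂ) * mono a.1 x) * (x j : ℂ)⁻¹

/-- `x` is a singular root of the system `c`: a common root at which the Jacobian matrix
is degenerate. -/
def IsSingularRoot {n : ℕ} (A : Fin n → Finset (Fin n → ℤ)) (c : Coeff A) (x : Torus n) :
    Prop :=
  IsRoot A c x ∧ (jacobian A c x).det = 0

/-- A subset of `ℂ^ι` is algebraic if it is the common zero locus of a family of polynomials. -/
def IsAlgebraicSet {ι : Type*} (Z : Set (ι → ℂ)) : Prop :=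
  ∃ S : Set (MvPolynomial ι ℂ), Z = {c | ∀ p ∈ S, MvPolynomial.eval c p = 0}

/-- The Zariski closure of a subset of `ℂ^ι`. -/
def zclosure {ι : Type*} (Z : Set (ι → ℂ)) : Set (ι → ℂ) :=
  ⋂₀ {W | IsAlgebraicSet W ∧ Z ⊆ W}

/-- The ideal of polynomials vanishing on a subset of `ℂ^ι`. -/
noncomputable def vanishingIdeal {ι : Type*} (Z : Set (ι → ℂ)) : Ideal (MvPolynomial ι ℂ) where
  carrier := {p | ∀ c ∈ Z, MvPolynomial.eval c p = 0}
  add_mem' := by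
    intro p q hp hq c hc
    simp [hp c hc, hq c hc]
  zero_mem' := by
    intro c hc
    simp
  smul_mem' := by
    intro p q hq c hc
    simp [smul_eq_mul, hq c hc]

/-- The (complex) dimension of a subset of `ℂ^ι`, as the Krull dimension of the coordinate
ring of its Zariski closure. -/
noncomputable def adim {ι : Type*} (Z : Set (ι → ℂ)) : WithBot ℕ∞ :=
  ringKrullDim (MvPolynomial ι ℂ ⧸ vanishingIdeal Z)

/-- The discriminant `D_A`: the Zariski closure of the set of systems having a singular root. -/
noncomputable def discSet {n : ℕ} (A : Fin n → Finset (Fin n → ℤ)) : Set (Coeff A) :=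
  zclosure {c | ∃ x, IsSingularRoot A c x}

/-- The tuple `A` is dual effective: `D_A` is a hypersurface, i.e. has complex dimension
`dim ℂ^A − 1`. -/
def DualEffective {n : ℕ} (A : Fin n → Finset (Fin n → ℤ)) : Prop :=
  adim (discSet A) = ((Fintype.card (CIdx A) - 1 : ℕ) : WithBot ℕ∞)

/-- The finite set `s` can be translated into the subgroup `L` of `ℤⁿ`. -/
def TranslatesInto {n : ℕ} (s : Finset (Fin n → ℤ)) (L : Submodule ℤ (Fin n → ℤ)) : Prop :=
  ∃ v : Fin n → ℤ, ∀ a ∈ s, a - v ∈ L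

/-- A tuple of finite sets in `ℤⁿ` is reduced if the sets cannot all be translated into one
common proper subgroup of `ℤⁿ`. -/
def IsReducedTuple {n : ℕ} (A : Fin n → Finset (Fin n → ℤ)) : Prop :=
  ¬ ∃ L : Submodule ℤ (Fin n → ℤ), L ≠ ⊤ ∧ ∀ i, TranslatesInto (A i) L

/-- A tuple of `n` finite sets in `ℤⁿ` is irreducible if for no `m` with `0 < m < n` can some
`n − m` of the sets be translated into one common subgroup of rank at most `n − m`. -/
def IsIrreducibleTuple {n : ℕ} (A : Fin n → Finset (Fin n → ℤ)) : Prop :=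
  ¬ ∃ (I : Finset (Fin n)) (L : Submodule ℤ (Fin n → ℤ)),
      0 < I.card ∧ I.card < n ∧ Module.finrank ℤ L ≤ I.card ∧
      ∀ i ∈ I, TranslatesInto (A i) L

/-- The incidence variety `E = {(x, f) : f(x) = 0} ⊆ (ℂ∖0)ⁿ × ℂ^A`. -/
def incidence {n : ℕ} (A : Fin n → Finset (Fin n → ℤ)) : Set (Torus n × Coeff A) :=
  {p | IsRoot A p.2 p.1}

/-- The projection `π : E → ℂ^A`. -/
def proj {n : ℕ} (A : Fin n → Finset (Fin n → ℤ)) : incidence A → Coeff A :=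
  fun p => p.1.2

/-- The set of roots of the system `c`. -/
def RootSet {n : ℕ} (A : Fin n → Finset (Fin n → ℤ)) (c : Coeff A) :=
  {x : Torus n // IsRoot A c x}

/-- `γ` is a loop in `ℂ^A ∖ B` based at `f`. -/
def IsLoop {n : ℕ} (A : Fin n → Finset (Fin n → ℤ)) (B : Set (Coeff A)) (f : Coeff A)
    (γ : unitInterval → Coeff A) : Prop :=
  Continuous γ ∧ (∀ t, γ t ∉ B) ∧ γ 0 = f ∧ γ 1 = f

/-- The loop `γ` based at `f` induces the permutation `σ` of the root set of `f` by path
lifting: for every root `x` the lift of `γ` starting at `x` ends at `σ x`. -/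
def Induces {n : ℕ} (A : Fin n → Finset (Fin n → ℤ)) (γ : unitInterval → Coeff A)
    (f : Coeff A) (σ : RootSet A f → RootSet A f) : Prop :=
  ∀ x : RootSet A f, ∃ δ : unitInterval → Torus n,
    Continuous δ ∧ δ 0 = x.1 ∧ (∀ t, IsRoot A (γ t) (δ t)) ∧ δ 1 = (σ x).1

/-- The space `ℂ^A` of Laurent polynomials supported at a single finite set `A ⊆ ℤⁿ`. -/
abbrev CoeffS {n : ℕ} (A : Finset (Fin n → ℤ)) := {a : Fin n → ℤ // a ∈ A} → ℂ

/-- The value of the polynomial with coefficients `c` at `x`. -/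
noncomputable def evalS {n : ℕ} (A : Finset (Fin n → ℤ)) (c : CoeffS A) (x : Torus n) : ℂ :=
  ∑ a ∈ A.attach, c a * mono a.1 x

/-- The partial derivative `∂f/∂xⱼ (x)` of the polynomial with coefficients `c`
(note `∂(x^a)/∂xⱼ = aⱼ x^a / xⱼ`). -/
noncomputable def pderivS {n : ℕ} (A : Finset (Fin n → ℤ)) (c : CoeffS A) (j : Fin n)
    (x : Torus n) : ℂ :=
  (∑ a ∈ A.attach, c a * (a.1 j : ℂ) * mono a.1 x) * (x j : ℂ)⁻¹

/-- The `A`-discriminant `D_A` of Gelfand–Kapranov–Zelevinsky: the Zariski closure of the set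
of polynomials `f ∈ ℂ^A` having a singular root `f(x) = 0`, `df(x) = 0` in the torus. -/
noncomputable def discSetS {n : ℕ} (A : Finset (Fin n → ℤ)) : Set (CoeffS A) :=
  zclosure {c | ∃ x : Torus n, evalS A c x = 0 ∧ ∀ j, pderivS A c j x = 0}

/-- The single set `A` is dual effective: `D_A` has complex dimension `|A| − 1`. -/
def DualEffectiveS {n : ℕ} (A : Finset (Fin n → ℤ)) : Prop :=
  adim (discSetS A) = ((A.card - 1 : ℕ) : WithBot ℕ∞)

/-!
Apply differentials to a generic point `c` of `D_A`. The Horn–Kapranov parametrization writes its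
coordinates as `c a = s ^ a * d a` with `∑ a, d a = 0` and `∑ a, d a • a = 0`; the Leibniz rule
turns these relations into `∑ a, s ^ (-a) * D (c a) = 0`, all of whose coefficients are nonzero.
In characteristic zero this makes each `c a` algebraic over the other coordinates. If `D_A` were the
preimage of `D_B` and `a ∉ B`, then `D_A` would be a cylinder in the direction `a`, that is,
`DependsOn (· ∈ D_A) {a}ᶜ`, and `c a` would be transcendental over the other coordinates.
-/

open MvPolynomial KaehlerDifferential

theorem formallyEtale_of_isAlgebraic (R K : Type*) [CommRing R] [Field K] [CharZero K]
    [Algebra R K] [FaithfulSMul R K] [Algebra.IsAlgebraic R K] : Algebra.FormallyEtale R K := by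
  have : IsDomain R := (FaithfulSMul.algebraMap_injective R K).isDomain (algebraMap R K)
  let F := FractionRing R
  let : Algebra F K := FractionRing.liftAlgebra R K
  have : CharZero F := (algebraMap F K).charZero
  have : Algebra.IsAlgebraic F K :=
    Algebra.IsAlgebraic.extendScalars (IsFractionRing.injective R F)
  have : Algebra.FormallyEtale F K := Algebra.FormallyEtale.of_isSeparable F K
  have : Algebra.FormallyEtale R F := Algebra.FormallyEtale.of_isLocalization (nonZeroDivisors R)
  exact Algebra.FormallyEtale.comp R F K

section

variable {ι R K : Type*} [CommRing R] [Field K] [CharZero K] [Algebra R K] {x : ι → K}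

theorem linearIndependent_D_of_isTranscendenceBasis
    (hx : IsTranscendenceBasis R x) : LinearIndependent K fun i => D R K (x i) := by
  have : Nontrivial R := (algebraMap R K).domain_nontrivial
  let P := MvPolynomial ι R
  let : Algebra P K := (MvPolynomial.aeval x).toAlgebra
  have : IsScalarTower R P K :=
    IsScalarTower.of_algebraMap_eq' (MvPolynomial.aeval x).comp_algebraMap.symm
  have : FaithfulSMul P K := (faithfulSMul_iff_algebraMap_injective P K).2 hx.1
  have : Algebra.IsAlgebraic P K :=
    have := hx.isAlgebraic
    Algebra.IsAlgebraic.of_ringHom_of_comp_eq hx.1.aevalEquiv (RingHom.id K)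
      hx.1.aevalEquiv.surjective Function.injective_id (RingHom.ext fun p => by
        simp [P, RingHom.algebraMap_toAlgebra])
  have : Algebra.FormallyEtale P K := formallyEtale_of_isAlgebraic P K
  let b := (isBaseChange_of_formallyEtale R P K).basis (mvPolynomialBasis R ι)
  have hb : (fun i => D R K (x i)) = b := funext fun i => by
    simp [b, IsBaseChange.basis_apply, RingHom.algebraMap_toAlgebra, P]
  exact hb ▸ b.linearIndependent

theorem linearIndependent_D_of_algebraicIndependent
    (hx : AlgebraicIndependent R x) : LinearIndependent K fun i => D R K (x i) := by
  obtain ⟨t, hxt, ht⟩ := exists_isTranscendenceBasis_superset (AlgebraicIndependent.coe_range hx)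
  have : Nontrivial R := (algebraMap R K).domain_nontrivial
  exact (linearIndependent_D_of_isTranscendenceBasis ht).comp
    (fun i => ⟨x i, hxt (Set.mem_range_self i)⟩) fun i j hij => hx.injective (Subtype.ext_iff.1 hij)

theorem D_ne_zero_of_transcendental {z : K} (hz : Transcendental R z) : D R K z ≠ 0 :=
  (linearIndependent_D_of_algebraicIndependent (x := fun _ : Unit => z)
    ((algebraicIndependent_unique_type_iff).2 hz)).ne_zero ()

theorem isAlgebraic_of_sum_smul_D_eq_zero [Fintype ι] {u : ι → K}
    (h : ∑ i, u i • D R K (x i) = 0) {i : ι} (hi : u i ≠ 0) :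
    IsAlgebraic (Algebra.adjoin R (x '' {i}ᶜ)) (x i) := by
  set S := Algebra.adjoin R (x '' {i}ᶜ)
  have hD : ∀ j ≠ i, D S K (x j) = 0 := fun j hj =>
    (D S K).map_algebraMap ⟨x j, Algebra.subset_adjoin (Set.mem_image_of_mem x hj)⟩
  have hsum : ∑ j, u j • D S K (x j) = 0 := by
    simpa using congrArg (KaehlerDifferential.map R S K K) h
  rw [Fintype.sum_eq_single i fun j hj => by rw [hD j hj, smul_zero]] at hsum
  by_contra hx
  exact smul_ne_zero hi (D_ne_zero_of_transcendental hx) hsum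

end

section

variable {ι : Type*}

theorem subset_zclosure (Z : Set (ι → ℂ)) : Z ⊆ zclosure Z :=
  Set.subset_sInter fun _ h => h.2

theorem vanishingIdeal_zclosure (Z : Set (ι → ℂ)) :
    vanishingIdeal (zclosure Z) = vanishingIdeal Z := by
  refine le_antisymm (fun G hG c hc => hG c (subset_zclosure Z hc)) fun G hG c hc => ?_
  exact hc {c | eval c G = 0} ⟨⟨{G}, by simp⟩, hG⟩

theorem eval_eq_of_mem_supported {R : Type*} [CommSemiring R] {s : Set ι} {G : MvPolynomial ι R}
    (hG : G ∈ supported R s) {c c' : ι → R} (h : ∀ i ∈ s, c i = c' i) : eval c G = eval c' G :=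
  eval₂Hom_congr' rfl (fun i hi _ => h i (mem_supported.1 hG hi)) rfl

theorem mem_vanishingIdeal_of_sum_mul_X_pow_mem {Z : Set (ι → ℂ)} {i : ι}
    (hZ : DependsOn (· ∈ Z) {i}ᶜ) {N : ℕ} {g : ℕ → MvPolynomial ι ℂ}
    (hg : ∀ k, g k ∈ supported ℂ {i}ᶜ)
    (hG : ∑ k ∈ Finset.range N, g k * X i ^ k ∈ vanishingIdeal Z) {k : ℕ} (hk : k < N) :
    g k ∈ vanishingIdeal Z := by
  classical
  intro c hc
  let p : Polynomial ℂ := ∑ k ∈ Finset.range N, Polynomial.C (eval c (g k)) * Polynomial.X ^ k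
  have hp : p = 0 := Polynomial.funext fun t => by
    have hagree : ∀ j ∈ ({i}ᶜ : Set ι), c j = Function.update c i t j :=
      fun j hj => (Function.update_of_ne hj t c).symm
    have hmem : Function.update c i t ∈ Z := (hZ hagree).mp hc
    simpa [p, Polynomial.eval_finsetSum, ← eval_eq_of_mem_supported (hg _) hagree]
      using hG _ hmem
  simpa [p, Polynomial.finsetSum_coeff, hk] using congrArg (Polynomial.coeff · k) hp

/-- The point `ξ` with coordinates in a `ℂ`-algebra `K` is a generic point of `Z`: the polynomials
vanishing at `ξ` are those vanishing on `Z`. -/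
def IsGenericPoint {K : Type*} [CommRing K] [Algebra ℂ K] (Z : Set (ι → ℂ)) (ξ : ι → K) : Prop :=
  RingHom.ker (aeval (R := ℂ) ξ) = vanishingIdeal Z

namespace IsGenericPoint

variable {K : Type*} [CommRing K] [Algebra ℂ K] {Z : Set (ι → ℂ)} {ξ : ι → K}

theorem aeval_eq_zero_iff (hξ : IsGenericPoint Z ξ) {G : MvPolynomial ι ℂ} :
    aeval ξ G = 0 ↔ G ∈ vanishingIdeal Z := by
  rw [← hξ, RingHom.mem_ker]

protected theorem zclosure (hξ : IsGenericPoint Z ξ) : IsGenericPoint (zclosure Z) ξ :=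
  hξ.trans (vanishingIdeal_zclosure Z).symm

theorem transcendental_of_dependsOn (hξ : IsGenericPoint Z ξ) {i : ι}
    (hZ : DependsOn (· ∈ Z) {i}ᶜ) :
    Transcendental (Algebra.adjoin ℂ (ξ '' {i}ᶜ)) (ξ i) := by
  have hlift (r : Algebra.adjoin ℂ (ξ '' {i}ᶜ)) : ∃ g ∈ supported ℂ {i}ᶜ, aeval ξ g = r := by
    have : Algebra.adjoin ℂ (ξ '' {i}ᶜ) = (supported ℂ {i}ᶜ).map (aeval ξ) := by
      simp [supported, AlgHom.map_adjoin, Set.image_image]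
    exact this.le r.2
  refine transcendental_iff.2 fun q hq => ?_
  choose g hg hgq using fun k => hlift (q.coeff k)
  have hG : ∑ k ∈ Finset.range (q.natDegree + 1), g k * X i ^ k ∈ vanishingIdeal Z := by
    rw [← hξ.aeval_eq_zero_iff, ← hq, Polynomial.aeval_eq_sum_range]
    simp [hgq, Algebra.smul_def]
  rw [← Polynomial.leadingCoeff_eq_zero]
  refine Subtype.ext ((hgq _).symm.trans (hξ.aeval_eq_zero_iff.2 ?_))
  exact mem_vanishingIdeal_of_sum_mul_X_pow_mem hZ hg hG q.natDegree.lt_succ_self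

end IsGenericPoint

theorem IsGenericPoint.not_dependsOn [Fintype ι] {K : Type*} [Field K] [Algebra ℂ K]
    {Z : Set (ι → ℂ)} {ξ : ι → K} (hξ : IsGenericPoint Z ξ) {u : ι → K}
    (hu : ∑ i, u i • D ℂ K (ξ i) = 0) {i : ι} (hi : u i ≠ 0) : ¬ DependsOn (· ∈ Z) {i}ᶜ :=
  have : CharZero K := charZero_of_injective_algebraMap (algebraMap ℂ K).injective
  fun hZ => hξ.transcendental_of_dependsOn hZ (isAlgebraic_of_sum_smul_D_eq_zero hu hi)

theorem isGenericPoint_algebraMap {τ K : Type*} [CommRing K] [Algebra ℂ K]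
    [Algebra (MvPolynomial τ ℂ) K] [IsScalarTower ℂ (MvPolynomial τ ℂ) K]
    [FaithfulSMul (MvPolynomial τ ℂ) K] (Φ : ι → MvPolynomial τ ℂ) {s : τ → Set ℂ}
    (hs : ∀ b, (s b).Infinite) :
    IsGenericPoint ((fun z i => eval z (Φ i)) '' Set.univ.pi s)
      (fun i => algebraMap (MvPolynomial τ ℂ) K (Φ i)) := by
  have heval (z : τ → ℂ) (G : MvPolynomial ι ℂ) :
      eval z (aeval Φ G) = eval (fun i => eval z (Φ i)) G := by
    rw [aeval_eq_bind₁, ← coe_aeval_eq_eval, ← coe_aeval_eq_eval]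
    exact aeval_bind₁ _ _ _
  ext G
  rw [RingHom.mem_ker, ← Function.comp_def, aeval_algebraMap_apply,
    FaithfulSMul.algebraMap_eq_zero_iff, funext_set_iff s hs]
  simp [vanishingIdeal, ← heval]

end

section

variable {ι σ : Type*} [Fintype ι]

/-- The space of linear relations among the vectors `(1, e i)`, that is, the affine relations among
the points `e i`. For exponents `e` these are the polynomials `∑ i, d i * x ^ e i` with a singular
root at `x = 1`. -/
def affineRelations (K : Type*) [CommRing K] (e : ι → σ → ℤ) : Submodule K (ι → K) :=
  LinearMap.ker (Fintype.linearCombination K fun i => ((1 : K), fun j => (e i j : K)))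

section

variable {K : Type*} [CommRing K] {e : ι → σ → ℤ} {d : ι → K}

theorem mem_affineRelations_iff :
    d ∈ affineRelations K e ↔ ∑ i, d i = 0 ∧ ∀ j, ∑ i, d i * (e i j : K) = 0 := by
  simp [affineRelations, Fintype.linearCombination_apply, Prod.ext_iff, funext_iff,
    Prod.fst_sum, Prod.snd_sum]

theorem affineRelations_sub_const (v : σ → ℤ) :
    affineRelations K (fun i => e i - v) = affineRelations K e := by
  ext d
  simp only [mem_affineRelations_iff, Pi.sub_apply, Int.cast_sub, mul_sub, Finset.sum_sub_distrib,
    ← Finset.sum_mul]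
  refine and_congr_right fun h => ?_
  simp [h]

theorem algebraMap_comp_mem_affineRelations {L : Type*} [CommRing L] [Algebra K L]
    (hd : d ∈ affineRelations K e) : algebraMap K L ∘ d ∈ affineRelations L e := by
  rw [mem_affineRelations_iff] at hd ⊢
  exact ⟨by simpa using congrArg (algebraMap K L) hd.1,
    fun j => by simpa using congrArg (algebraMap K L) (hd.2 j)⟩

end

section

variable {R K M : Type*} [CommRing R] [Field K] [Algebra R K] [AddCommGroup M] [Module K M]
  [Module R M] (D : Derivation R K M) {x : σ → K}

theorem derivation_prod_zpow {s : Finset σ} (hx : ∀ j ∈ s, x j ≠ 0) (a : σ → ℤ) :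
    D (∏ j ∈ s, x j ^ a j) =
      (∏ j ∈ s, x j ^ a j) • ∑ j ∈ s, ((a j : K) * (x j)⁻¹) • D (x j) := by
  classical
  induction s using Finset.induction_on with
  | empty => simp
  | insert i s hi ih =>
    have hxi : x i ≠ 0 := hx i (Finset.mem_insert_self i s)
    rw [Finset.prod_insert hi, Finset.sum_insert hi, Derivation.leibniz,
      ih fun j hj => hx j (Finset.mem_insert_of_mem hj), Derivation.leibniz_zpow,
      zpow_sub_one₀ hxi, ← Int.cast_smul_eq_zsmul K]
    module

theorem sum_inv_smul_derivation_prod_zpow_mul [Fintype σ] (hx : ∀ j, x j ≠ 0) {e : ι → σ → ℤ}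
    {d : ι → K} (hd : d ∈ affineRelations K e) :
    ∑ i, (∏ j, x j ^ e i j)⁻¹ • D ((∏ j, x j ^ e i j) * d i) = 0 := by
  obtain ⟨hsum, hmom⟩ := mem_affineRelations_iff.1 hd
  have hterm (i : ι) : (∏ j, x j ^ e i j)⁻¹ • D ((∏ j, x j ^ e i j) * d i) =
      D (d i) + ∑ j, (d i * e i j * (x j)⁻¹) • D (x j) := by
    have hm : ∏ j, x j ^ e i j ≠ 0 :=
      Finset.prod_ne_zero_iff.2 fun j _ => zpow_ne_zero _ (hx j)
    rw [Derivation.leibniz, derivation_prod_zpow D (fun j _ => hx j), smul_add,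
      inv_smul_smul₀ hm, smul_comm (d i), inv_smul_smul₀ hm, Finset.smul_sum]
    simp only [smul_smul, mul_assoc]
  calc ∑ i, (∏ j, x j ^ e i j)⁻¹ • D ((∏ j, x j ^ e i j) * d i)
      = D (∑ i, d i) + ∑ j, ((∑ i, d i * e i j) * (x j)⁻¹) • D (x j) := by
        simp only [hterm, Finset.sum_add_distrib, map_sum, Finset.sum_mul, Finset.sum_smul]
        rw [Finset.sum_comm]
    _ = 0 := by simp [hsum, hmom]

end

end

section

variable {ι σ τ k : Type*} [Fintype σ] [Fintype τ] [CommRing k]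

/-- The generic Horn–Kapranov parametrization `x ^ e i * ∑ b, y b * w b i` of the polynomials with a
singular root, in variables `x = X (Sum.inl _)` and `y = X (Sum.inr _)`. When `w` spans the affine
relations among the exponents, `y` parametrizes the polynomials singular at `1`, and the torus point
`x` moves the root to `x⁻¹`. The exponents are natural numbers, so as to get polynomials: integer
exponents are first translated. -/
noncomputable def hornKapranov (e : ι → σ → ℕ) (w : τ → ι → k) (i : ι) :
    MvPolynomial (σ ⊕ τ) k :=
  (∏ j, X (Sum.inl j) ^ e i j) * ∑ b, C (w b i) * X (Sum.inr b)

theorem eval_hornKapranov (e : ι → σ → ℕ) (w : τ → ι → k) (i : ι) (z : σ ⊕ τ → k) :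
    eval z (hornKapranov e w i) =
      (∏ j, z (Sum.inl j) ^ e i j) * (∑ b, z (Sum.inr b) • w b) i := by
  simp [hornKapranov, mul_comm (w _ i)]

theorem sum_inv_smul_D_hornKapranov [Fintype ι] {K : Type*} [Field K] [Algebra k K]
    [Algebra (MvPolynomial (σ ⊕ τ) k) K] [IsScalarTower k (MvPolynomial (σ ⊕ τ) k) K]
    [FaithfulSMul (MvPolynomial (σ ⊕ τ) k) K]
    {e : ι → σ → ℕ} {w : τ → ι → k} (hw : ∀ b, w b ∈ affineRelations k fun i j => (e i j : ℤ)) :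
    ∑ i, (algebraMap (MvPolynomial (σ ⊕ τ) k) K (∏ j, X (Sum.inl j) ^ e i j))⁻¹ •
      D k K (algebraMap (MvPolynomial (σ ⊕ τ) k) K (hornKapranov e w i)) = 0 := by
  let x : σ ⊕ τ → K := fun b => algebraMap (MvPolynomial (σ ⊕ τ) k) K (X b)
  have : Nontrivial k := (algebraMap k K).domain_nontrivial
  have hx (j : σ) : x (Sum.inl j) ≠ 0 :=
    (FaithfulSMul.algebraMap_eq_zero_iff _ _).not.2 (X_ne_zero _)
  let d : ι → K := ∑ b, x (Sum.inr b) • (algebraMap k K ∘ w b)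
  have hd : d ∈ affineRelations K fun i j => (e i j : ℤ) :=
    Submodule.sum_mem _ fun b _ =>
      Submodule.smul_mem _ _ (algebraMap_comp_mem_affineRelations (hw b))
  have hmono (i : ι) : algebraMap (MvPolynomial (σ ⊕ τ) k) K (∏ j, X (Sum.inl j) ^ e i j) =
      ∏ j, x (Sum.inl j) ^ (e i j : ℤ) := by
    simp [x]
  have hC (r : k) : algebraMap (MvPolynomial (σ ⊕ τ) k) K (C r) = algebraMap k K r :=
    (IsScalarTower.algebraMap_apply k (MvPolynomial (σ ⊕ τ) k) K r).symm
  have hξ (i : ι) : algebraMap (MvPolynomial (σ ⊕ τ) k) K (hornKapranov e w i) =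
      (∏ j, x (Sum.inl j) ^ (e i j : ℤ)) * d i := by
    simp only [hornKapranov, map_mul, hmono, map_sum, hC, d, Finset.sum_apply, Pi.smul_apply,
      Function.comp_apply, smul_eq_mul, x, mul_comm (algebraMap k K _)]
  simpa only [hmono, hξ] using sum_inv_smul_derivation_prod_zpow_mul (D k K) hx hd

end

section

variable {n : ℕ}

theorem mono_ne_zero (a : Fin n → ℤ) (x : Torus n) : mono a x ≠ 0 :=
  Finset.prod_ne_zero_iff.2 fun j _ => zpow_ne_zero _ (x j).ne_zero

theorem mono_inv (a : Fin n → ℤ) (x : Torus n) : mono a x⁻¹ = (mono a x)⁻¹ := by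
  simp [mono]

theorem mono_sub (a b : Fin n → ℤ) (x : Torus n) : mono (a - b) x = mono a x / mono b x := by
  simp [mono, zpow_sub₀]

/-- The set of Laurent polynomials supported at `A`, given by their coefficients, that have a
singular root in the torus. Its Zariski closure is the `A`-discriminant. -/
def singularSet (A : Finset (Fin n → ℤ)) : Set (CoeffS A) :=
  {c | ∃ x : Torus n, evalS A c x = 0 ∧ ∀ j, pderivS A c j x = 0}

variable {A : Finset (Fin n → ℤ)} {c : CoeffS A}

theorem discSetS_eq_zclosure (A : Finset (Fin n → ℤ)) : discSetS A = zclosure (singularSet A) :=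
  rfl

theorem mem_singularSet_iff : c ∈ singularSet A ↔
    ∃ x : Torus n, (fun a => c a * mono a.1 x) ∈ affineRelations ℂ Subtype.val := by
  refine exists_congr fun x => Iff.trans ?_ mem_affineRelations_iff.symm
  simp [evalS, pderivS, mul_right_comm]

theorem mem_singularSet_iff_exists_mono_sub (v : Fin n → ℤ) : c ∈ singularSet A ↔
    ∃ s : Torus n, ∃ d ∈ affineRelations ℂ Subtype.val, c = fun a => mono (a.1 - v) s * d a := by
  rw [mem_singularSet_iff]
  constructor
  · rintro ⟨x, hx⟩
    refine ⟨x⁻¹, _, Submodule.smul_mem _ (mono v x)⁻¹ hx, funext fun a => ?_⟩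
    have ha := mono_ne_zero a.1 x
    have hv := mono_ne_zero v x
    simp only [mono_sub, mono_inv, Pi.smul_apply, smul_eq_mul]
    field_simp
  · rintro ⟨s, d, hd, rfl⟩
    refine ⟨s⁻¹, ?_⟩
    convert Submodule.smul_mem _ (mono v s)⁻¹ hd using 2 with a
    have ha := mono_ne_zero a.1 s
    have hv := mono_ne_zero v s
    simp only [mono_sub, mono_inv, Pi.smul_apply, smul_eq_mul]
    field_simp

theorem singularSet_eq_image_hornKapranov {τ : Type*} [Fintype τ] {v : Fin n → ℤ}
    {e : {a // a ∈ A} → Fin n → ℕ} (he : ∀ a j, (e a j : ℤ) = a.1 j - v j) {w : τ → CoeffS A}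
    (hw : Submodule.span ℂ (Set.range w) = affineRelations ℂ Subtype.val) :
    singularSet A = (fun z a => eval z (hornKapranov e w a)) ''
      Set.univ.pi (Sum.elim (fun _ => {0}ᶜ) fun _ => Set.univ) := by
  have hmono (s : Torus n) (a : {a // a ∈ A}) : mono (a.1 - v) s = ∏ j, (s j : ℂ) ^ e a j := by
    simp [mono, ← he]
  ext c
  simp only [mem_singularSet_iff_exists_mono_sub v, ← hw, Submodule.mem_span_range_iff_exists_fun,
    eval_hornKapranov, Set.mem_image, Set.mem_univ_pi, Sum.forall, hmono]
  constructor
  · rintro ⟨s, _, ⟨y, rfl⟩, rfl⟩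
    exact ⟨Sum.elim (fun j => s j) y, by simp⟩
  · rintro ⟨z, ⟨hz, -⟩, rfl⟩
    exact ⟨fun j => Units.mk0 (z (Sum.inl j)) (hz j), _, ⟨fun b => z (Sum.inr b), rfl⟩, rfl⟩

theorem exists_nat_shift (A : Finset (Fin n → ℤ)) :
    ∃ (v : Fin n → ℤ) (e : {a // a ∈ A} → Fin n → ℕ), ∀ a j, (e a j : ℤ) = a.1 j - v j := by
  obtain ⟨v, hv⟩ := A.bddBelow
  exact ⟨v, fun a j => (a.1 j - v j).toNat, fun a j =>
    Int.toNat_of_nonneg (sub_nonneg.2 (hv a.2 j))⟩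

theorem not_dependsOn_mem_discSetS (a : {a // a ∈ A}) : ¬ DependsOn (· ∈ discSetS A) {a}ᶜ := by
  obtain ⟨v, e, he⟩ := exists_nat_shift A
  obtain ⟨r, w, hw⟩ := Submodule.fg_iff_exists_fin_generating_family.1
    (IsNoetherian.noetherian (affineRelations ℂ (Subtype.val : {a // a ∈ A} → Fin n → ℤ)))
  let K := FractionRing (MvPolynomial (Fin n ⊕ Fin r) ℂ)
  have hgen : IsGenericPoint (discSetS A) fun a =>
      algebraMap (MvPolynomial (Fin n ⊕ Fin r) ℂ) K (hornKapranov e w a) := by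
    rw [discSetS_eq_zclosure, singularSet_eq_image_hornKapranov he hw]
    refine (isGenericPoint_algebraMap _ (Sum.forall.2 ⟨fun _ => ?_, fun _ => ?_⟩)).zclosure
    · exact (Set.finite_singleton 0).infinite_compl
    · exact Set.infinite_univ
  have he' : (fun a j => (e a j : ℤ)) = fun a => a.1 - v := funext₂ he
  have hrel (b : Fin r) : w b ∈ affineRelations ℂ fun a j => (e a j : ℤ) := by
    rw [he', affineRelations_sub_const, ← hw]
    exact Submodule.subset_span (Set.mem_range_self b)
  refine hgen.not_dependsOn (sum_inv_smul_D_hornKapranov hrel) (inv_ne_zero ?_)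
  rw [Ne, FaithfulSMul.algebraMap_eq_zero_iff, Finset.prod_eq_zero_iff]
  simp

theorem discriminant_ne_subdiscriminant_general (A B : Finset (Fin n → ℤ))
    (hBA : B ⊆ A) (hne : B ≠ A) :
    discSetS A ≠
      (fun (c : CoeffS A) (b : {a : Fin n → ℤ // a ∈ B}) => c ⟨b.1, hBA b.2⟩) ⁻¹'
        discSetS B := by
  obtain ⟨a, haA, haB⟩ := Finset.exists_of_ssubset (hBA.ssubset_of_ne hne)
  intro h
  refine not_dependsOn_mem_discSetS ⟨a, haA⟩ ?_
  rw [h]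
  refine fun c c' hcc' => congrArg (· ∈ discSetS B) (funext fun b => hcc' _ ?_)
  exact fun hba => ne_of_mem_of_not_mem b.2 haB (congrArg Subtype.val hba)

end

/-- Corollary 3.11: if `A ⊆ ℤⁿ` is dual effective, then for every proper
subset `B ⊊ A` the discriminant `D_A` differs from the preimage of `D_B` under the
coefficient-forgetting projection `ℂ^A → ℂ^B`. -/
theorem discriminant_ne_subdiscriminant {n : ℕ} (A B : Finset (Fin n → ℤ))
    (heff : DualEffectiveS A) (hBA : B ⊆ A) (hne : B ≠ A) :
    discSetS A ≠
      (fun (c : CoeffS A) (b : {a : Fin n → ℤ // a ∈ B}) => c ⟨b.1, hBA b.2⟩) ⁻¹'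
        discSetS B :=
  discriminant_ne_subdiscriminant_general A B hBA hne

end Esterov
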